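/- For every fixed c > 0, liminf_{N→∞} d_TV(P^{t_N}(id, ·), U) ≥ 1 − exp(−(1/2)·(√(1 + e^c/2) − 1)²), where t_N = ⌊(N/(2b))·(log N − c)⌋ and N = 2n ranges over even integers. -/

import Mathlib

open scoped BigOperators

noncomputable section

namespace BRT

/-- The transition matrix of the biased random transposition shuffle on `𝔖_N` determined
by the set `A ⊆ [N]` (with `B = Aᶜ`) and the bias parameters `a`, `b`:
`P(x,y) = 2a²/N²` if `y x⁻¹` is a transposition of two elements of `A`, `2b²/N²` if it is a
transposition of two elements of `B`, `2ab/N²` if it transposes an element of `A` with one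
of `B`, `(a²|A| + b²|B|)/N²` if `y = x`, and `0` otherwise. -/
def transMat (a b : ℝ) {N : ℕ} (A : Finset (Fin N)) :
    Matrix (Equiv.Perm (Fin N)) (Equiv.Perm (Fin N)) ℝ :=
  fun x y =>
    if y = x then (a ^ 2 * A.card + b ^ 2 * Aᶜ.card) / (N : ℝ) ^ 2
    else if ∃ i j : Fin N, i ≠ j ∧ i ∈ A ∧ j ∈ A ∧ y * x⁻¹ = Equiv.swap i j then
      2 * a ^ 2 / (N : ℝ) ^ 2
    else if ∃ i j : Fin N, i ≠ j ∧ i ∉ A ∧ j ∉ A ∧ y * x⁻¹ = Equiv.swap i j then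
      2 * b ^ 2 / (N : ℝ) ^ 2
    else if ∃ i j : Fin N, i ∈ A ∧ j ∉ A ∧ y * x⁻¹ = Equiv.swap i j then
      2 * a * b / (N : ℝ) ^ 2
    else 0

/-- Total variation distance between two probability mass functions on a finite type. -/
def dTV {α : Type*} [Fintype α] (p q : α → ℝ) : ℝ :=
  (∑ x, |p x - q x|) / 2

/-- The uniform distribution on permutations of `Fin N`. -/
def unif (N : ℕ) : Equiv.Perm (Fin N) → ℝ :=
  fun _ => ((N.factorial : ℝ))⁻¹

/-!
Let `X` count the fixed points in `B = Aᶜ`, the block of slow cards, and test the two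
distributions with `f = (1 - D) ^ X`. By Cauchy–Schwarz `1 - dTV p q ≤ √(E_p f * E_q f⁻¹)`.
Under the uniform distribution the factorial moments of `X` are those of a Poisson variable of
mean `1 / 2` at most, which bounds `E f⁻¹`.

For the shuffle, `E f` is bounded by a discrete-time supermartingale argument. Cards of `B` that
were never touched make the parameter `δ` of `(1 - δ) ^ X` contract geometrically, reaching
`D * exp c / N` at the cutoff time, while fixed points created by the shuffle contribute a factor
`exp (-κ * (D - δ))` for any `κ < (1 - D / 2) / 2`. The rate of creation depends on the number of
positions of `B` that carry a card of `B`. One step takes the expected square of its centred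
version `blockExcess` to at most `1 - 4 * a * b / N` times the old value plus `1`, so adding a
small multiple of this square to the test function absorbs the fluctuations.

With `k = √(1 + exp c / 2)`, the values `D = 1 - 1 / k` and `κ = 1 - k / 2` turn the product of the
two expectations into `exp (-(k - 1) ^ 2)` in the limit.
-/

open Finset Equiv Filter Topology
open scoped Matrix

section TotalVariation

variable {α : Type*} [Fintype α]

lemma sum_min_eq_one_sub_dTV {p q : α → ℝ} (hp : ∑ x, p x = 1) (hq : ∑ x, q x = 1) :
    ∑ x, min (p x) (q x) = 1 - dTV p q := by
  have hmin : ∀ x, min (p x) (q x) = (p x + q x - |p x - q x|) / 2 := fun x ↦ by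
    have hsum := min_add_max (p x) (q x)
    have hdiff := max_sub_min_eq_abs (q x) (p x)
    rw [max_comm, min_comm] at hdiff
    linarith
  simp only [hmin, dTV, ← sum_div, sum_sub_distrib, sum_add_distrib, hp, hq]
  ring

lemma one_sub_dTV_le_sqrt_mul_sqrt {p q f : α → ℝ} (hp : ∀ x, 0 ≤ p x) (hq : ∀ x, 0 ≤ q x)
    (hp1 : ∑ x, p x = 1) (hq1 : ∑ x, q x = 1) (hf : ∀ x, 0 < f x) :
    1 - dTV p q ≤ √(∑ x, p x * f x) * √(∑ x, q x * (f x)⁻¹) := by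
  rw [← sum_min_eq_one_sub_dTV hp1 hq1]
  have hmin : ∀ x, min (p x) (q x) ≤ √(p x * f x) * √(q x * (f x)⁻¹) := fun x ↦ by
    have hcancel : p x * f x * (q x * (f x)⁻¹) = p x * q x := by
      have := (hf x).ne'
      field_simp
    rw [← Real.sqrt_mul (mul_nonneg (hp x) (hf x).le), hcancel]
    refine Real.le_sqrt_of_sq_le ?_
    rw [sq]
    exact mul_le_mul (min_le_left _ _) (min_le_right _ _) (le_min (hp x) (hq x)) (hp x)
  exact (sum_le_sum fun x _ ↦ hmin x).trans
    (Real.sum_sqrt_mul_sqrt_le _ (fun x ↦ mul_nonneg (hp x) (hf x).le)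
      fun x ↦ mul_nonneg (hq x) (inv_nonneg.2 (hf x).le))

end TotalVariation

section RowStochastic

variable {α : Type*} [Fintype α] [DecidableEq α] {M : Matrix α α ℝ}

lemma mulVec_mono (hM : M ∈ Matrix.rowStochastic ℝ α) {u v : α → ℝ} (h : u ≤ v) :
    M *ᵥ u ≤ M *ᵥ v := fun _ ↦
  sum_le_sum fun y _ ↦
    mul_le_mul_of_nonneg_left (h y) (Matrix.nonneg_of_mem_rowStochastic hM)

lemma pow_mulVec_le_of_mulVec_le_succ_add (hM : M ∈ Matrix.rowStochastic ℝ α) {Φ : ℕ → α → ℝ}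
    {η : ℝ} (hΦ : ∀ t x, (M *ᵥ Φ t) x ≤ Φ (t + 1) x + η) (t : ℕ) (x : α) :
    (M ^ t *ᵥ Φ 0) x ≤ Φ t x + t * η := by
  induction t generalizing x with
  | zero => simp
  | succ t ih =>
    have hstep : M *ᵥ (M ^ t *ᵥ Φ 0) ≤ M *ᵥ (Φ t + (t * η) • 1) :=
      mulVec_mono hM fun y ↦ by simpa using ih y
    calc (M ^ (t + 1) *ᵥ Φ 0) x = (M *ᵥ (M ^ t *ᵥ Φ 0)) x := by
          rw [pow_succ', Matrix.mulVec_mulVec]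
      _ ≤ (M *ᵥ Φ t) x + t * η := by
          simpa [Matrix.mulVec_add, Matrix.mulVec_smul,
            Matrix.one_vecMul_of_mem_rowStochastic hM] using hstep x
      _ ≤ Φ (t + 1) x + (t + 1 : ℕ) * η := by
          push_cast
          linarith [hΦ t x]

end RowStochastic

section FixedPoints

variable {α : Type*} [DecidableEq α]

/-- The fixed points of `σ` that lie in `S`. The deck after too few shuffles still has many of
them in the slow block `S = Aᶜ`. -/
def fixedIn (S : Finset α) (σ : Perm α) : Finset α := {i ∈ S | σ i = i}

lemma fixedIn_one (S : Finset α) : fixedIn S 1 = S := by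
  simp [fixedIn]

lemma subset_fixedIn_iff {S T : Finset α} {σ : Perm α} :
    T ⊆ fixedIn S σ ↔ T ⊆ S ∧ ∀ i ∈ T, σ i = i := by
  simp only [fixedIn, subset_iff, mem_filter]
  grind

variable [Fintype α]

lemma card_perm_fixing (T : Finset α) :
    #{σ : Perm α | ∀ i ∈ T, σ i = i} = (Fintype.card α - #T).factorial := by
  have h := Fintype.card_congr (Perm.subtypeEquivSubtypePerm (· ∉ T))
  rw [Fintype.card_perm, Fintype.card_subtype_compl, Fintype.card_coe, Fintype.card_subtype] at h
  simpa using h.symm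

lemma descFactorial_mul_pow_le {m n : ℕ} (hmn : m ≤ n) (j : ℕ) :
    m.descFactorial j * n ^ j ≤ m ^ j * n.descFactorial j := by
  induction j with
  | zero => simp
  | succ j ih =>
    have hfactor : (m - j) * n ≤ m * (n - j) := by
      rw [Nat.sub_mul, Nat.mul_sub]
      exact Nat.sub_le_sub_left (by rw [mul_comm m]; exact Nat.mul_le_mul_left j hmn) _
    calc m.descFactorial (j + 1) * n ^ (j + 1)
        = (m - j) * n * (m.descFactorial j * n ^ j) := by rw [Nat.descFactorial_succ]; ring
      _ ≤ m * (n - j) * (m ^ j * n.descFactorial j) := Nat.mul_le_mul hfactor ih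
      _ = m ^ (j + 1) * n.descFactorial (j + 1) := by rw [Nat.descFactorial_succ]; ring

lemma choose_mul_factorial_le {m n j : ℕ} (hmn : m ≤ n) (hjm : j ≤ m) :
    (m.choose j * (n - j).factorial : ℝ) ≤ n.factorial * ((m / n : ℝ) ^ j / j.factorial) := by
  rcases Nat.eq_zero_or_pos n with rfl | hn
  · obtain rfl : m = 0 := by omega
    obtain rfl : j = 0 := by omega
    simp
  have hchoose : (m.descFactorial j : ℝ) = j.factorial * m.choose j := by
    exact_mod_cast Nat.descFactorial_eq_factorial_mul_choose m j
  have hfactorial : (n.factorial : ℝ) = (n - j).factorial * n.descFactorial j := by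
    exact_mod_cast (Nat.factorial_mul_descFactorial (hjm.trans hmn)).symm
  have hdesc : (m.descFactorial j * n ^ j : ℝ) ≤ m ^ j * n.descFactorial j := by
    exact_mod_cast descFactorial_mul_pow_le hmn j
  rw [div_pow, div_div, mul_div_assoc', le_div_iff₀ (by positivity), hfactorial]
  calc (m.choose j * (n - j).factorial * (n ^ j * j.factorial) : ℝ)
      = (n - j).factorial * (m.descFactorial j * n ^ j) := by rw [hchoose]; ring
    _ ≤ (n - j).factorial * (m ^ j * n.descFactorial j) := by gcongr
    _ = (n - j).factorial * n.descFactorial j * m ^ j := by ring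

lemma one_add_pow_card_fixedIn (S : Finset α) (s : ℝ) (σ : Perm α) :
    (1 + s) ^ #(fixedIn S σ) =
      ∑ T ∈ S.powerset, if ∀ i ∈ T, σ i = i then s ^ #T else 0 := by
  have hpowerset : (fixedIn S σ).powerset = {T ∈ S.powerset | ∀ i ∈ T, σ i = i} := by
    ext T
    simp only [mem_powerset, mem_filter, subset_fixedIn_iff]
  rw [← sum_filter, ← hpowerset, add_comm, ← sum_pow_mul_eq_add_pow]
  simp only [one_pow, mul_one]

lemma sum_one_add_pow_card_fixedIn_le (S : Finset α) {s : ℝ} (hs : 0 ≤ s) :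
    ∑ σ, (1 + s) ^ #(fixedIn S σ) ≤
      (Fintype.card α).factorial * Real.exp (s * #S / Fintype.card α) := by
  set n := Fintype.card α
  calc ∑ σ, (1 + s) ^ #(fixedIn S σ)
      = ∑ T ∈ S.powerset, (n - #T).factorial * s ^ #T := by
        simp only [one_add_pow_card_fixedIn]
        rw [sum_comm]
        simp only [← sum_filter, sum_const, card_perm_fixing, nsmul_eq_mul, n]
    _ = ∑ j ∈ range (#S + 1), (#S).choose j * (n - j).factorial * s ^ j := by
        rw [sum_powerset_apply_card fun j ↦ ((n - j).factorial : ℝ) * s ^ j]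
        simp only [nsmul_eq_mul, mul_assoc]
    _ ≤ ∑ j ∈ range (#S + 1), n.factorial * ((#S / n : ℝ) ^ j / j.factorial) * s ^ j := by
        refine sum_le_sum fun j hj ↦ mul_le_mul_of_nonneg_right ?_ (pow_nonneg hs j)
        exact choose_mul_factorial_le (card_le_univ S) (Nat.lt_succ_iff.1 (mem_range.1 hj))
    _ = n.factorial * ∑ j ∈ range (#S + 1), (s * #S / n) ^ j / j.factorial := by
        rw [mul_sum]
        refine sum_congr rfl fun j _ ↦ ?_
        rw [mul_div_assoc, mul_pow]
        ring
    _ ≤ n.factorial * Real.exp (s * #S / n) := by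
        gcongr
        exact Real.sum_le_exp_of_nonneg (by positivity) _

end FixedPoints

section SwapStep

variable {α : Type*} [DecidableEq α] {S : Finset α} {x : Perm α} {p q : α}

/-- The number (`0` or `1`) of fixed points in `S` at risk when the card `p` is moved. -/
def fixedLoss (S : Finset α) (x : Perm α) (p : α) : ℕ := if p ∈ S ∧ x p = p then 1 else 0

/-- The number (`0` or `1`) of fixed points in `S` created at the position `q` when the card `p`
found there is exchanged with the card `q`. -/
def fixedGain (S : Finset α) (x : Perm α) (p q : α) : ℕ := if q ∈ S ∧ x q = p ∧ p ≠ q then 1 else 0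

lemma fixedLoss_eq_zero_or_one : fixedLoss S x p = 0 ∨ fixedLoss S x p = 1 := by
  unfold fixedLoss; split_ifs <;> simp

lemma fixedGain_eq_zero_or_one : fixedGain S x p q = 0 ∨ fixedGain S x p q = 1 := by
  unfold fixedGain; split_ifs <;> simp

lemma one_sub_pow_mul_one_add_mul_fixedLoss {δ : ℝ} (hδ : δ < 1) :
    (1 - δ) ^ fixedLoss S x p * (1 + δ / (1 - δ) * fixedLoss S x p) = 1 := by
  have hδ' : 1 - δ ≠ 0 := by linarith
  rcases fixedLoss_eq_zero_or_one (S := S) (x := x) (p := p) with h | h <;>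
    simp only [h, Nat.cast_zero, Nat.cast_one] <;> field_simp <;> ring

lemma one_sub_pow_fixedGain_le {δ : ℝ} (hδ : 0 ≤ δ) :
    (1 - δ) ^ (fixedGain S x p q + fixedGain S x q p) ≤
      1 - δ * (1 - δ / 2) * (fixedGain S x p q + fixedGain S x q p) := by
  rcases fixedGain_eq_zero_or_one (S := S) (x := x) (p := p) (q := q) with h | h <;>
    rcases fixedGain_eq_zero_or_one (S := S) (x := x) (p := q) (q := p) with h' | h' <;>
    simp only [h, h', Nat.cast_zero, Nat.cast_one] <;> nlinarith

lemma card_fixedIn_eq_sum_fixedLoss {T : Finset α} (hST : S ⊆ T) (x : Perm α) :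
    #(fixedIn S x) = ∑ i ∈ T, fixedLoss S x i := by
  simp only [fixedIn, fixedLoss, ite_and, sum_ite_mem, inter_eq_right.2 hST, card_filter]

lemma card_fixedIn_add_gain_le (S : Finset α) (x : Perm α) (p q : α) :
    #(fixedIn S x) + (fixedGain S x p q + fixedGain S x q p) ≤
      #(fixedIn S (swap p q * x)) + (fixedLoss S x p + fixedLoss S x q) := by
  set T := insert p (insert q S)
  have hST : S ⊆ T := (subset_insert q S).trans (subset_insert p _)
  have hp : p ∈ T := mem_insert_self p _
  have hq : q ∈ T := mem_insert_of_mem (mem_insert_self q S)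
  have hsingle : ∀ (c : ℕ) {j : α}, j ∈ T → c = ∑ i ∈ T, if i = j then c else 0 :=
    fun c j hj ↦ by rw [sum_ite_eq', if_pos hj]
  rw [card_fixedIn_eq_sum_fixedLoss hST, card_fixedIn_eq_sum_fixedLoss hST,
    hsingle (fixedGain S x p q) hq, hsingle (fixedGain S x q p) hp,
    hsingle (fixedLoss S x p) hp, hsingle (fixedLoss S x q) hq]
  simp only [← sum_add_distrib]
  refine sum_le_sum fun i _ ↦ ?_
  simp only [fixedLoss, fixedGain, Perm.mul_apply, swap_apply_def]
  grind

lemma one_sub_pow_card_fixedIn_swap_le (S : Finset α) (x : Perm α) (p q : α) {δ : ℝ}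
    (hδ : 0 ≤ δ) (hδ1 : δ < 1) :
    (1 - δ) ^ #(fixedIn S (swap p q * x)) ≤ (1 - δ) ^ #(fixedIn S x) *
      ((1 + δ / (1 - δ) * fixedLoss S x p) * (1 + δ / (1 - δ) * fixedLoss S x q) -
        δ * (1 - δ / 2) * (fixedGain S x p q + fixedGain S x q p)) := by
  have hθ : 0 < 1 - δ := by linarith
  have : 0 ≤ δ / (1 - δ) := by positivity
  set L := (1 + δ / (1 - δ) * fixedLoss S x p) * (1 + δ / (1 - δ) * fixedLoss S x q)
  set G := (1 - δ) ^ (fixedGain S x p q + fixedGain S x q p)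
  have hL : (1 - δ) ^ (fixedLoss S x p + fixedLoss S x q) * L = 1 := by
    rw [pow_add, mul_mul_mul_comm, one_sub_pow_mul_one_add_mul_fixedLoss hδ1,
      one_sub_pow_mul_one_add_mul_fixedLoss hδ1, one_mul]
  have hL1 : 1 ≤ L :=
    one_le_mul_of_one_le_of_one_le (le_add_of_nonneg_right (by positivity))
      (le_add_of_nonneg_right (by positivity))
  have hG1 : G ≤ 1 := pow_le_one₀ hθ.le (by linarith)
  have hpow : (1 - δ) ^ #(fixedIn S (swap p q * x)) *
      (1 - δ) ^ (fixedLoss S x p + fixedLoss S x q) ≤ (1 - δ) ^ #(fixedIn S x) * G := by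
    rw [← pow_add, ← pow_add]
    exact pow_le_pow_of_le_one hθ.le (by linarith) (card_fixedIn_add_gain_le S x p q)
  calc (1 - δ) ^ #(fixedIn S (swap p q * x))
      = (1 - δ) ^ #(fixedIn S (swap p q * x)) *
          (1 - δ) ^ (fixedLoss S x p + fixedLoss S x q) * L := by rw [mul_assoc, hL, mul_one]
    _ ≤ (1 - δ) ^ #(fixedIn S x) * G * L := by gcongr
    _ ≤ (1 - δ) ^ #(fixedIn S x) * (L + (G - 1)) := by
        rw [mul_assoc]
        gcongr
        nlinarith
    _ ≤ _ := by
        gcongr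
        linarith [one_sub_pow_fixedGain_le (S := S) (x := x) (p := p) (q := q) hδ]

variable [Fintype α] {w : α → ℝ} {b : ℝ}

lemma sum_mul_fixedLoss (hw : ∀ i ∈ S, w i = b) (x : Perm α) :
    ∑ p, w p * fixedLoss S x p = b * #(fixedIn S x) := by
  rw [card_fixedIn_eq_sum_fixedLoss (subset_univ S), Nat.cast_sum, mul_sum]
  refine sum_congr rfl fun p _ ↦ ?_
  by_cases hp : p ∈ S
  · rw [hw p hp]
  · simp [fixedLoss, hp]

lemma sum_mul_mul_fixedGain (hw : ∀ i ∈ S, w i = b) (x : Perm α) :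
    ∑ p, ∑ q, w p * w q * fixedGain S x p q =
      b * (∑ q ∈ S, w (x q) - b * #(fixedIn S x)) := by
  have hgain : ∀ q p, w p * w q * fixedGain S x p q =
      if p = x q then b * ((if q ∈ S then w (x q) else 0) - w q * fixedLoss S x q) else 0 := by
    intro q p
    by_cases hq : q ∈ S
    · simp only [fixedGain, fixedLoss, hq, hw q hq, true_and, if_true, Nat.cast_ite, Nat.cast_one,
        Nat.cast_zero]
      grind
    · simp [fixedGain, fixedLoss, hq]
  rw [sum_comm]
  simp only [hgain, sum_ite_eq', mem_univ, if_true, ← mul_sum, sum_sub_distrib,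
    sum_mul_fixedLoss hw, sum_ite_mem, univ_inter]

lemma sum_one_sub_pow_card_fixedIn_swap_le (hw0 : ∀ i, 0 ≤ w i) (hw : ∀ i ∈ S, w i = b)
    (x : Perm α) {δ : ℝ} (hδ : 0 ≤ δ) (hδ1 : δ < 1) :
    ∑ p, ∑ q, w p * w q * (1 - δ) ^ #(fixedIn S (swap p q * x)) ≤
      (1 - δ) ^ #(fixedIn S x) * ((∑ i, w i + δ / (1 - δ) * (b * #(fixedIn S x))) ^ 2 -
        2 * (δ * (1 - δ / 2)) * (b * (∑ q ∈ S, w (x q) - b * #(fixedIn S x)))) := by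
  set s := δ / (1 - δ)
  set ρ := δ * (1 - δ / 2)
  have hloss : ∑ p, ∑ q, w p * w q * ((1 + s * fixedLoss S x p) * (1 + s * fixedLoss S x q)) =
      (∑ i, w i + s * (b * #(fixedIn S x))) ^ 2 := by
    have hfactor : ∑ p, w p * (1 + s * fixedLoss S x p) =
        ∑ i, w i + s * (b * #(fixedIn S x)) := by
      simp only [mul_add, mul_one, sum_add_distrib, ← sum_mul_fixedLoss hw x, mul_sum]
      congr 1
      exact sum_congr rfl fun p _ ↦ by ring
    rw [← hfactor, sq, sum_mul_sum]
    exact sum_congr rfl fun p _ ↦ sum_congr rfl fun q _ ↦ by ring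
  have hgain : ∑ p, ∑ q, w p * w q * (ρ * (fixedGain S x p q + fixedGain S x q p)) =
      2 * ρ * (b * (∑ q ∈ S, w (x q) - b * #(fixedIn S x))) := by
    have hsymm : ∑ p, ∑ q, w p * w q * fixedGain S x q p =
        b * (∑ q ∈ S, w (x q) - b * #(fixedIn S x)) := by
      rw [sum_comm, ← sum_mul_mul_fixedGain hw x]
      exact sum_congr rfl fun p _ ↦ sum_congr rfl fun q _ ↦ by ring
    calc _ = ρ * (∑ p, ∑ q, w p * w q * fixedGain S x p q +
          ∑ p, ∑ q, w p * w q * fixedGain S x q p) := by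
          simp only [← sum_add_distrib, mul_sum]
          exact sum_congr rfl fun p _ ↦ sum_congr rfl fun q _ ↦ by ring
      _ = _ := by rw [sum_mul_mul_fixedGain hw, hsymm]; ring
  rw [← hloss, ← hgain, ← sum_sub_distrib, mul_sum]
  simp only [← sum_sub_distrib, mul_sum, ← mul_sub]
  refine sum_le_sum fun p _ ↦ sum_le_sum fun q _ ↦ ?_
  rw [mul_left_comm]
  exact mul_le_mul_of_nonneg_left (one_sub_pow_card_fixedIn_swap_le S x p q hδ hδ1)
    (mul_nonneg (hw0 p) (hw0 q))

end SwapStep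

lemma sum_mul_mul_sub_mul_sub {α : Type*} [Fintype α] (w u v : α → ℝ) :
    ∑ p, ∑ q, w p * w q * ((v p - v q) * (u q - u p)) =
      2 * ((∑ i, w i * v i) * ∑ i, w i * u i - (∑ i, w i) * ∑ i, w i * (v i * u i)) := by
  calc _ = ∑ p, ∑ q, w p * v p * (w q * u q) + ∑ p, ∑ q, w p * u p * (w q * v q) -
        ∑ p, ∑ q, w p * (w q * (v q * u q)) - ∑ p, ∑ q, w p * (v p * u p) * w q := by
        simp only [← sum_add_distrib, ← sum_sub_distrib]
        exact sum_congr rfl fun p _ ↦ sum_congr rfl fun q _ ↦ by ring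
    _ = _ := by
        simp only [← sum_mul_sum]
        ring

lemma sum_mul_comp_swap {α : Type*} [Fintype α] [DecidableEq α] (u φ : α → ℝ) (p q : α) :
    ∑ j, u j * φ (swap p q j) = ∑ j, u j * φ j + (u p - u q) * (φ q - φ p) := by
  have hφ : ∀ j, u j * φ (swap p q j) = u j * φ j +
      ((if j = p then u j * (φ q - φ p) else 0) + if j = q then u j * (φ p - φ q) else 0) := by
    intro j
    rw [swap_apply_def]
    grind
  simp only [hφ, sum_add_distrib, sum_ite_eq', mem_univ, if_true]
  ring

section BlockExcess

variable {α : Type*} [DecidableEq α]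

/-- The two-valued card weight of the biased shuffle: `b` on the slow block `S`, `a` off it. A step
exchanges the cards `p` and `q`, drawn independently with probabilities proportional to it. -/
def blockWeight (a b : ℝ) (S : Finset α) (i : α) : ℝ := if i ∈ S then b else a

/-- The real-valued indicator of the block `S`. -/
def blockIndicator (S : Finset α) (i : α) : ℝ := if i ∈ S then 1 else 0

/-- The number of positions of `S` occupied by cards of `S`, centred at its mean under the
uniform distribution. -/
def blockExcess [Fintype α] (S : Finset α) (x : Perm α) : ℝ :=
  #{i ∈ S | x i ∈ S} - #S ^ 2 / Fintype.card α

variable {a b : ℝ} {S : Finset α}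

lemma blockWeight_of_mem {i : α} (hi : i ∈ S) : blockWeight a b S i = b := if_pos hi

lemma blockWeight_nonneg (ha : 0 ≤ a) (hb : 0 ≤ b) (i : α) : 0 ≤ blockWeight a b S i := by
  unfold blockWeight; split_ifs <;> assumption

lemma blockWeight_eq_add_mul_blockIndicator (i : α) :
    blockWeight a b S i = a + (b - a) * blockIndicator S i := by
  unfold blockWeight blockIndicator; split_ifs <;> ring

lemma sum_block_blockWeight_comp (x : Perm α) :
    ∑ i ∈ S, blockWeight a b S (x i) = a * #S + (b - a) * #{i ∈ S | x i ∈ S} := by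
  simp only [blockWeight_eq_add_mul_blockIndicator, blockIndicator, sum_add_distrib, ← mul_sum,
    sum_const, nsmul_eq_mul, sum_boole]
  ring

variable [Fintype α]

lemma sum_blockWeight :
    ∑ i, blockWeight a b S i = a * Fintype.card α + (b - a) * #S := by
  simp only [blockWeight_eq_add_mul_blockIndicator, blockIndicator, sum_add_distrib, ← mul_sum,
    sum_const, nsmul_eq_mul, sum_boole, card_univ, filter_univ_mem]
  ring

lemma blockExcess_one (S : Finset α) : blockExcess S 1 = #S - #S ^ 2 / Fintype.card α := by
  have hS : {i ∈ S | (1 : Perm α) i ∈ S} = S := filter_true_of_mem fun _ hi ↦ hi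
  rw [blockExcess, hS]

lemma card_filter_mem_block_eq_sum (S : Finset α) (x : Perm α) :
    (#{i ∈ S | x i ∈ S} : ℝ) = ∑ j, blockIndicator S j * blockIndicator S (x⁻¹ j) := by
  rw [← Equiv.sum_comp x, card_filter]
  simp [blockIndicator]

lemma blockExcess_swap_mul (S : Finset α) (x : Perm α) (p q : α) :
    blockExcess S (swap p q * x) = blockExcess S x +
      (blockIndicator S (x⁻¹ p) - blockIndicator S (x⁻¹ q)) *
        (blockIndicator S q - blockIndicator S p) := by
  rw [blockExcess, blockExcess, card_filter_mem_block_eq_sum, card_filter_mem_block_eq_sum]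
  simp only [mul_inv_rev, swap_inv, Perm.mul_apply]
  rw [sum_mul_comp_swap _ fun j ↦ blockIndicator S (x⁻¹ j)]
  ring

variable [Nonempty α]

lemma sum_block_blockWeight_comp_eq (hW : ∑ i, blockWeight a b S i = Fintype.card α)
    (x : Perm α) :
    ∑ i ∈ S, blockWeight a b S (x i) = #S + (b - a) * blockExcess S x := by
  have hN : (Fintype.card α : ℝ) ≠ 0 := by exact_mod_cast Fintype.card_ne_zero
  rw [sum_blockWeight] at hW
  rw [sum_block_blockWeight_comp, blockExcess]
  field_simp
  linear_combination (#S : ℝ) * hW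

lemma sum_blockExcess_increment (hW : ∑ i, blockWeight a b S i = Fintype.card α) (x : Perm α) :
    ∑ p, ∑ q, blockWeight a b S p * blockWeight a b S q *
      ((blockIndicator S (x⁻¹ p) - blockIndicator S (x⁻¹ q)) *
        (blockIndicator S q - blockIndicator S p)) =
      -2 * a * b * Fintype.card α * blockExcess S x := by
  have hN : (Fintype.card α : ℝ) ≠ 0 := by exact_mod_cast Fintype.card_ne_zero
  have hinv : ∑ i, blockWeight a b S i * blockIndicator S (x⁻¹ i) =
      #S + (b - a) * blockExcess S x := by
    rw [← sum_block_blockWeight_comp_eq hW, ← Equiv.sum_comp x]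
    simp [blockIndicator]
  have hone : ∑ i, blockWeight a b S i * blockIndicator S i = b * #S := by
    simp only [blockIndicator, mul_ite, mul_one, mul_zero, sum_ite_mem, univ_inter]
    rw [sum_congr rfl fun i hi ↦ blockWeight_of_mem hi, sum_const, nsmul_eq_mul, mul_comm]
  have hboth : ∑ i, blockWeight a b S i * (blockIndicator S (x⁻¹ i) * blockIndicator S i) =
      b * #{i ∈ S | x i ∈ S} := by
    rw [card_filter_mem_block_eq_sum, mul_sum]
    refine sum_congr rfl fun i _ ↦ ?_
    by_cases hi : i ∈ S <;> simp [blockWeight, blockIndicator, hi]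
  have hcount : (Fintype.card α * #{i ∈ S | x i ∈ S} : ℝ) =
      Fintype.card α * blockExcess S x + #S ^ 2 := by
    rw [blockExcess]
    field_simp
    ring
  rw [sum_mul_mul_sub_mul_sub, hinv, hone, hboth, hW]
  rw [sum_blockWeight] at hW
  linear_combination -2 * b * hcount + 2 * b * blockExcess S x * hW

lemma sum_blockExcess_swap_sq_le (ha : 0 ≤ a) (hb : 0 ≤ b)
    (hW : ∑ i, blockWeight a b S i = Fintype.card α) (x : Perm α) :
    ∑ p, ∑ q, blockWeight a b S p * blockWeight a b S q * blockExcess S (swap p q * x) ^ 2 ≤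
      Fintype.card α ^ 2 * ((1 - 4 * a * b / Fintype.card α) * blockExcess S x ^ 2 + 1) := by
  have hN : (Fintype.card α : ℝ) ≠ 0 := by exact_mod_cast Fintype.card_ne_zero
  set w := blockWeight a b S
  set V := blockExcess S x
  let d : α → α → ℝ := fun p q ↦ (blockIndicator S (x⁻¹ p) - blockIndicator S (x⁻¹ q)) *
    (blockIndicator S q - blockIndicator S p)
  have hd : ∀ p q, d p q ^ 2 ≤ 1 := fun p q ↦ by
    simp only [d, blockIndicator]
    split_ifs <;> norm_num
  have hW2 : ∑ p, ∑ q, w p * w q = Fintype.card α ^ 2 := by rw [← sum_mul_sum, hW, sq]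
  calc ∑ p, ∑ q, w p * w q * blockExcess S (swap p q * x) ^ 2
      ≤ ∑ p, ∑ q, (V ^ 2 * (w p * w q) + 2 * V * (w p * w q * d p q) + w p * w q) := by
        refine sum_le_sum fun p _ ↦ sum_le_sum fun q _ ↦ ?_
        have hw : 0 ≤ w p * w q :=
          mul_nonneg (blockWeight_nonneg ha hb p) (blockWeight_nonneg ha hb q)
        rw [blockExcess_swap_mul]
        linarith [mul_le_mul_of_nonneg_left (hd p q) hw, show w p * w q * (V + d p q) ^ 2 =
          V ^ 2 * (w p * w q) + 2 * V * (w p * w q * d p q) + w p * w q * d p q ^ 2 by ring]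
    _ = _ := by
        have hincrement : ∑ p, ∑ q, w p * w q * d p q = -2 * a * b * Fintype.card α * V :=
          sum_blockExcess_increment hW x
        have hsum : ∀ (f : α → α → ℝ) (r : ℝ), ∑ p, ∑ q, r * f p q = r * ∑ p, ∑ q, f p q :=
          fun f r ↦ by simp only [mul_sum]
        simp only [sum_add_distrib, hsum, hW2, hincrement]
        field_simp
        ring

end BlockExcess

section SwapSums

variable {α : Type*} [DecidableEq α]

lemma swap_eq_swap_iff {i j p q : α} (hij : i ≠ j) :
    swap p q = swap i j ↔ (p = i ∧ q = j) ∨ (p = j ∧ q = i) := by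
  constructor
  · intro h
    have hi := Equiv.congr_fun h i
    have hj := Equiv.congr_fun h j
    simp only [swap_apply_left, swap_apply_right] at hi hj
    simp only [swap_apply_def] at hi hj
    grind
  · rintro (⟨rfl, rfl⟩ | ⟨rfl, rfl⟩)
    · rfl
    · exact swap_comm _ _

variable [Fintype α]

lemma sum_ite_swap_eq_one (w : α → ℝ) :
    (∑ p, ∑ q, if swap p q = 1 then w p * w q else 0) = ∑ p, w p ^ 2 := by
  simp only [swap_eq_one_iff, sum_ite_eq, mem_univ, if_true, sq]

lemma sum_ite_swap_eq_swap (w : α → ℝ) {i j : α} (hij : i ≠ j) :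
    (∑ p, ∑ q, if swap p q = swap i j then w p * w q else 0) = 2 * (w i * w j) := by
  have hsplit : ∀ p q, (if swap p q = swap i j then w p * w q else 0) =
      (if p = i then if q = j then w p * w q else 0 else 0) +
        if p = j then if q = i then w p * w q else 0 else 0 := by
    intro p q
    simp only [swap_eq_swap_iff hij]
    grind
  simp only [hsplit, sum_add_distrib, sum_ite_irrel, sum_ite_eq', mem_univ, if_true,
    sum_const_zero]
  ring

end SwapSums

section TransitionMatrix

variable {a b : ℝ} {N : ℕ} {A : Finset (Fin N)}

lemma transMat_apply (a b : ℝ) (A : Finset (Fin N)) (x y : Perm (Fin N)) :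
    transMat a b A x y = (∑ p, ∑ q, if swap p q * x = y then
      blockWeight a b Aᶜ p * blockWeight a b Aᶜ q else 0) / (N : ℝ) ^ 2 := by
  simp only [← eq_mul_inv_iff_mul_eq]
  by_cases hxy : y = x
  · rw [transMat, if_pos hxy, hxy, mul_inv_cancel, sum_ite_swap_eq_one, ← sum_add_sum_compl A]
    congr 2
    · rw [sum_congr rfl fun i hi ↦ by rw [blockWeight, if_neg (by simpa using hi)], sum_const,
        nsmul_eq_mul, mul_comm]
    · rw [sum_congr rfl fun i hi ↦ by rw [blockWeight_of_mem hi], sum_const, nsmul_eq_mul,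
        mul_comm]
  · rw [transMat, if_neg hxy]
    split_ifs with hAA hBB hAB
    · obtain ⟨i, j, hij, hi, hj, h⟩ := hAA
      simp only [h, sum_ite_swap_eq_swap _ hij, blockWeight, mem_compl, hi, hj, not_true, if_false]
      ring
    · obtain ⟨i, j, hij, hi, hj, h⟩ := hBB
      simp only [h, sum_ite_swap_eq_swap _ hij, blockWeight, mem_compl, hi, hj, not_false_iff,
        if_true]
      ring
    · obtain ⟨i, j, hi, hj, h⟩ := hAB
      have hij : i ≠ j := by rintro rfl; exact hj hi
      simp only [h, sum_ite_swap_eq_swap _ hij, blockWeight, mem_compl, hi, hj, not_true,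
        not_false_iff, if_true, if_false]
      ring
    · have hne : ∀ p q, swap p q ≠ y * x⁻¹ := by
        intro p q h
        have hpq : p ≠ q := by
          rintro rfl
          rw [swap_self, eq_mul_inv_iff_mul_eq] at h
          exact hxy (h.symm.trans (one_mul x))
        by_cases hp : p ∈ A <;> by_cases hq : q ∈ A
        · exact hAA ⟨p, q, hpq, hp, hq, h.symm⟩
        · exact hAB ⟨p, q, hp, hq, h.symm⟩
        · exact hAB ⟨q, p, hq, hp, by rw [swap_comm, h]⟩
        · exact hBB ⟨p, q, hpq, hp, hq, h.symm⟩
      simp only [hne, if_false, sum_const_zero, zero_div]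

lemma transMat_mulVec (a b : ℝ) (A : Finset (Fin N)) (h : Perm (Fin N) → ℝ)
    (x : Perm (Fin N)) :
    (transMat a b A *ᵥ h) x = (∑ p, ∑ q, blockWeight a b Aᶜ p * blockWeight a b Aᶜ q *
      h (swap p q * x)) / (N : ℝ) ^ 2 := by
  simp only [Matrix.mulVec, dotProduct, transMat_apply, div_mul_eq_mul_div, ← sum_div, sum_mul,
    ite_mul, zero_mul]
  rw [sum_comm]
  congr 1
  refine sum_congr rfl fun p _ ↦ ?_
  rw [sum_comm]
  simp only [sum_ite_eq, mem_univ, if_true]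

lemma transMat_mem_rowStochastic [NeZero N] (ha : 0 ≤ a) (hb : 0 ≤ b)
    (hW : ∑ i, blockWeight a b Aᶜ i = N) :
    transMat a b A ∈ Matrix.rowStochastic ℝ (Perm (Fin N)) := by
  have hN : (N : ℝ) ≠ 0 := NeZero.ne _
  have hw : ∀ i, 0 ≤ blockWeight a b Aᶜ i := blockWeight_nonneg ha hb
  refine Matrix.mem_rowStochastic.2 ⟨fun x y ↦ ?_, funext fun x ↦ ?_⟩
  · rw [transMat_apply]
    refine div_nonneg (sum_nonneg fun p _ ↦ sum_nonneg fun q _ ↦ ?_) (sq_nonneg _)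
    split_ifs
    exacts [mul_nonneg (hw p) (hw q), le_rfl]
  · rw [transMat_mulVec]
    simp only [Pi.one_apply, mul_one, ← sum_mul_sum, hW]
    field_simp

lemma transMat_mulVec_blockExcess_sq_le [NeZero N] (ha : 0 ≤ a) (hb : 0 ≤ b)
    (hW : ∑ i, blockWeight a b Aᶜ i = N) (x : Perm (Fin N)) :
    (transMat a b A *ᵥ fun y ↦ blockExcess Aᶜ y ^ 2) x ≤
      (1 - 4 * a * b / N) * blockExcess Aᶜ x ^ 2 + 1 := by
  have hN : 0 < (N : ℝ) := Nat.cast_pos.2 (NeZero.pos N)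
  rw [transMat_mulVec, div_le_iff₀' (by positivity)]
  simpa only [Fintype.card_fin] using
    sum_blockExcess_swap_sq_le ha hb (by simpa only [Fintype.card_fin] using hW) x

lemma transMat_mulVec_one_sub_pow_card_fixedIn_le [NeZero N] (ha : 0 ≤ a) (hb : 0 ≤ b)
    (hW : ∑ i, blockWeight a b Aᶜ i = N) (x : Perm (Fin N)) {δ : ℝ} (hδ : 0 ≤ δ) (hδ1 : δ < 1) :
    (transMat a b A *ᵥ fun y ↦ (1 - δ) ^ #(fixedIn Aᶜ y)) x ≤ (1 - δ) ^ #(fixedIn Aᶜ x) *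
      ((1 + δ / (1 - δ) * (b / N) * #(fixedIn Aᶜ x)) ^ 2 - 2 * (δ * (1 - δ / 2)) * (b / N) *
        ((#Aᶜ + (b - a) * blockExcess Aᶜ x - b * #(fixedIn Aᶜ x)) / N)) := by
  have hN : 0 < (N : ℝ) := Nat.cast_pos.2 (NeZero.pos N)
  have h := sum_one_sub_pow_card_fixedIn_swap_le (blockWeight_nonneg ha hb)
    (fun i ↦ blockWeight_of_mem) x (S := Aᶜ) hδ hδ1
  rw [sum_block_blockWeight_comp_eq (by simpa only [Fintype.card_fin] using hW), hW] at h
  rw [transMat_mulVec, div_le_iff₀ (by positivity)]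
  refine h.trans_eq ?_
  field_simp

end TransitionMatrix

section OneStepInequalities

variable {D δ z β : ℝ} (X : ℕ)

/-- The factor by which one shuffle contracts the parameter `δ` of the test function
`(1 - δ) ^ X`, where `X` counts fixed points of relative weight `z` and `δ ≤ D`. -/
def contractionRate (D z : ℝ) : ℝ := 1 - 2 * z - z ^ 2 / (1 - D)

lemma contractionRate_le_one (hD : D < 1) (hz : 0 ≤ z) : contractionRate D z ≤ 1 := by
  have : 0 ≤ z ^ 2 / (1 - D) := div_nonneg (sq_nonneg z) (by linarith)
  unfold contractionRate
  linarith

lemma one_third_le_contractionRate (hD0 : 0 ≤ D) (hD : D < 1) (hz : 0 ≤ z)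
    (hzD : z / (1 - D) ≤ 1 / 4) : 1 / 3 ≤ contractionRate D z := by
  have hzσ : z ≤ z / (1 - D) := le_div_self hz (by linarith) (by linarith)
  have hsq : z ^ 2 / (1 - D) = z * (z / (1 - D)) := by ring
  unfold contractionRate
  nlinarith

lemma one_sub_pow_mul_one_add_mul_sq_le {u : ℝ} (hδ1 : δ ≤ 1) (hu : 0 ≤ u) :
    (1 - δ) ^ X * (1 + u * X) ^ 2 ≤ ((1 - δ) * (1 + u) ^ 2) ^ X := by
  have hbernoulli : 1 + u * X ≤ (1 + u) ^ X := by
    rw [mul_comm]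
    exact one_add_mul_le_pow (by linarith) X
  rw [mul_pow, pow_right_comm]
  exact mul_le_mul_of_nonneg_left (pow_le_pow_left₀ (by positivity) hbernoulli 2)
    (pow_nonneg (by linarith) X)

lemma one_sub_pow_mul_one_add_half_sq_le_one (hδ : 0 ≤ δ) (hδ1 : δ ≤ 1) :
    (1 - δ) ^ X * (1 + δ / 2 * X) ^ 2 ≤ 1 :=
  (one_sub_pow_mul_one_add_mul_sq_le X hδ1 (by linarith)).trans
    (pow_le_one₀ (mul_nonneg (by linarith) (sq_nonneg _)) (by nlinarith [mul_nonneg hδ hδ]))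

lemma one_sub_pow_mul_one_add_sq_le_rate (hδ : 0 ≤ δ) (hδD : δ ≤ D) (hD : D < 1) (hz : 0 ≤ z) :
    (1 - δ) ^ X * (1 + δ / (1 - δ) * z * X) ^ 2 ≤ (1 - contractionRate D z * δ) ^ X := by
  have hθ : 0 < 1 - δ := by linarith
  have : 0 ≤ δ / (1 - δ) := by positivity
  have hsD : δ / (1 - δ) ≤ 1 / (1 - D) :=
    div_le_div₀ zero_le_one (by linarith) (by linarith) (by linarith)
  refine (one_sub_pow_mul_one_add_mul_sq_le X (by linarith) (by positivity)).trans
    (pow_le_pow_left₀ (by positivity) ?_ X)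
  calc (1 - δ) * (1 + δ / (1 - δ) * z) ^ 2
      = 1 - (1 - 2 * z - z ^ 2 * (δ / (1 - δ))) * δ := by field_simp; ring
    _ ≤ 1 - (1 - 2 * z - z ^ 2 * (1 / (1 - D))) * δ := by gcongr
    _ = 1 - contractionRate D z * δ := by rw [contractionRate, mul_one_div]

lemma one_sub_pow_mul_sq_sub_one_le (hδ : 0 ≤ δ) (hδD : δ ≤ D) (hD : D < 1) (hz : 0 ≤ z)
    (hzD : z / (1 - D) ≤ 1 / 4) :
    (1 - δ) ^ X * ((1 + δ / (1 - δ) * z * X) ^ 2 - 1) ≤ 2 * (z / (1 - D)) := by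
  have hθ : 0 < 1 - δ := by linarith
  have : 0 < 1 - D := by linarith
  have hbase := one_sub_pow_mul_one_add_half_sq_le_one X hδ (by linarith)
  have hpow : 0 ≤ (1 - δ) ^ X := by positivity
  have hle : δ / (1 - δ) * z * X ≤ z / (1 - D) * (2 * (δ / 2 * X)) := by
    rw [show δ / (1 - δ) * z * X = z / (1 - δ) * (2 * (δ / 2 * X)) by ring]
    gcongr
  set y := δ / 2 * X
  have hsq : (1 + δ / (1 - δ) * z * X) ^ 2 - 1 ≤ 2 * (z / (1 - D)) * ((1 + y) ^ 2 - 1) := by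
    have hmono : (1 + δ / (1 - δ) * z * X) ^ 2 ≤ (1 + z / (1 - D) * (2 * y)) ^ 2 := by gcongr
    nlinarith [mul_nonneg (by positivity : 0 ≤ z / (1 - D)) (sq_nonneg y)]
  calc _ ≤ (1 - δ) ^ X * (2 * (z / (1 - D)) * ((1 + y) ^ 2 - 1)) := by gcongr
    _ = 2 * (z / (1 - D)) * ((1 - δ) ^ X * (1 + y) ^ 2 - (1 - δ) ^ X) := by ring
    _ ≤ 2 * (z / (1 - D)) := mul_le_of_le_one_right (by positivity) (by linarith)

/-- The additive error per step is quadratic in `z` because `δ * X * (1 - δ) ^ X` is bounded. -/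
lemma one_sub_pow_mul_drift_le (hδ : 0 ≤ δ) (hδD : δ ≤ D) (hD : D < 1) (hz : 0 ≤ z)
    (hzD : z / (1 - D) ≤ 1 / 4) (hβ : 0 ≤ β) (hβ1 : β ≤ 1) (v : ℝ) :
    (1 - δ) ^ X * ((1 + δ / (1 - δ) * z * X) ^ 2 -
        2 * (δ * (1 - δ / 2)) * z * (β + v - z * X)) ≤
      (1 - 2 * (δ * (1 - δ / 2)) * z * β) * (1 - contractionRate D z * δ) ^ X +
        6 * (z ^ 2 / (1 - D)) + 2 * δ * z * |v| := by
  have hθ : 0 < 1 - δ := by linarith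
  have hzσ : z ≤ z / (1 - D) := le_div_self hz (by linarith) (by linarith)
  set f := (1 - δ) ^ X
  set Q := 1 + δ / (1 - δ) * z * X
  set m := 2 * (δ * (1 - δ / 2)) * z with hm
  have hf : 0 ≤ f := by positivity
  have hf1 : f ≤ 1 := pow_le_one₀ hθ.le (by linarith)
  have hQ : 1 ≤ Q := le_add_of_nonneg_right (by positivity)
  have hm0 : 0 ≤ m := by
    have : 0 ≤ 1 - δ / 2 := by linarith
    positivity
  have : δ * (1 - δ / 2) ≤ δ := by nlinarith
  have hmδ : m ≤ 2 * δ * z := by nlinarith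
  have hm1 : m ≤ 2 * z := by nlinarith
  have hcontract : (1 - m * β) * (f * Q ^ 2) ≤ (1 - m * β) * (1 - contractionRate D z * δ) ^ X :=
    mul_le_mul_of_nonneg_left (one_sub_pow_mul_one_add_sq_le_rate X hδ hδD hD hz) (by nlinarith)
  have hsquare : m * β * (f * (Q ^ 2 - 1)) ≤ 2 * z * (2 * (z / (1 - D))) :=
    mul_le_mul (by nlinarith) (one_sub_pow_mul_sq_sub_one_le X hδ hδD hD hz hzD)
      (mul_nonneg hf (sub_nonneg.2 (one_le_pow₀ hQ))) (by linarith)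
  have hcount : m * (z * (f * X)) ≤ 2 * z ^ 2 := by
    have hbase := one_sub_pow_mul_one_add_half_sq_le_one X hδ (by linarith)
    have hfX : f * (δ * X) ≤ 1 := by nlinarith [mul_nonneg hf (sq_nonneg (δ * X))]
    calc m * (z * (f * X)) ≤ 2 * δ * z * (z * (f * X)) := by gcongr
      _ = 2 * z ^ 2 * (f * (δ * X)) := by ring
      _ ≤ 2 * z ^ 2 := mul_le_of_le_one_right (by positivity) hfX
  have hexcess : f * (m * -v) ≤ 2 * δ * z * |v| :=
    calc f * (m * -v) ≤ f * (m * |v|) := by gcongr; exact neg_le_abs v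
      _ ≤ m * |v| := mul_le_of_le_one_left (by positivity) hf1
      _ ≤ 2 * δ * z * |v| := by gcongr
  have hσ : z ^ 2 ≤ z ^ 2 / (1 - D) := le_div_self (sq_nonneg z) (by linarith) (by linarith)
  have hring : 2 * z * (2 * (z / (1 - D))) = 4 * (z ^ 2 / (1 - D)) := by ring
  linear_combination hcontract + hsquare + hcount + hexcess + 2 * hσ + hring

end OneStepInequalities

section Potential

variable {a b κ μ D δ z β : ℝ}

/-- The space-time potential: along `δ ↦ r * δ` it dominates its image under one shuffle up to a
small error. The exponential pays for the fixed points created by the shuffle, the quadratic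
term for the fluctuations of `blockExcess` that modulate their creation. -/
def potential {α : Type*} [Fintype α] [DecidableEq α] (κ μ δ : ℝ) (S : Finset α) (x : Perm α) : ℝ :=
  Real.exp (κ * δ) * (1 - δ) ^ #(fixedIn S x) + μ * δ * blockExcess S x ^ 2

/-- The error by which one shuffle of `N` cards can increase the potential. -/
def stepError (a b D μ N : ℝ) : ℝ :=
  18 * ((b / N) ^ 2 / (1 - D)) + μ + 9 * (b / N) * (b - a) ^ 2 / (μ * N ^ 2)

lemma exp_mul_one_sub_gain_le (hδ : 0 ≤ δ) (hδD : δ ≤ D) (hz : 0 ≤ z) (hβ : 0 ≤ β)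
    (hκ : κ * (2 + z / (1 - D)) ≤ 2 * (1 - D / 2) * β) :
    Real.exp (κ * δ) * (1 - 2 * (δ * (1 - δ / 2)) * z * β) ≤
      Real.exp (κ * (contractionRate D z * δ)) := by
  have hexponent : κ * δ - κ * (contractionRate D z * δ) ≤ 2 * (δ * (1 - δ / 2)) * z * β :=
    calc κ * δ - κ * (contractionRate D z * δ) = δ * z * (κ * (2 + z / (1 - D))) := by
          unfold contractionRate; ring
      _ ≤ δ * z * (2 * (1 - D / 2) * β) := by gcongr
      _ ≤ δ * z * (2 * (1 - δ / 2) * β) := by gcongr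
      _ = 2 * (δ * (1 - δ / 2)) * z * β := by ring
  set m := 2 * (δ * (1 - δ / 2)) * z * β
  calc Real.exp (κ * δ) * (1 - m) ≤ Real.exp (κ * δ) * Real.exp (-m) := by
        gcongr
        linarith [Real.add_one_le_exp (-m)]
    _ ≤ Real.exp (κ * (contractionRate D z * δ)) := by
        rw [← Real.exp_add]
        exact Real.exp_le_exp.2 (by linarith)

lemma excess_drift_le (ha : 1 ≤ a) (hδ : 0 ≤ δ) (hδ1 : δ ≤ 1) (hz : 0 ≤ z)
    (hzD : z / (1 - D) ≤ 1 / 4) (hμ : 0 < μ) (V d : ℝ) :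
    μ * δ * ((1 - 4 * a * z) * V ^ 2 + 1) + 3 * (2 * δ * z * |d * V|) ≤
      μ * (contractionRate D z * δ) * V ^ 2 + μ + 9 * z * d ^ 2 / μ := by
  -- AM-GM: `6 * |d * V| ≤ μ * V ^ 2 + 9 * d ^ 2 / μ`
  have hamgm : 6 * |d * V| ≤ μ * V ^ 2 + 9 * d ^ 2 / μ := by
    have hsq : 0 ≤ (μ * |V| - 3 * |d|) ^ 2 / μ := by positivity
    have hexpand : (μ * |V| - 3 * |d|) ^ 2 / μ = μ * V ^ 2 + 9 * d ^ 2 / μ - 6 * |d * V| := by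
      rw [abs_mul, ← sq_abs V, ← sq_abs d]
      field_simp
      ring
    linarith
  have hrate : 1 - 4 * a * z + z ≤ contractionRate D z := by
    have hsq : z ^ 2 / (1 - D) = z * (z / (1 - D)) := by ring
    unfold contractionRate
    nlinarith
  have : 0 ≤ 9 * z * d ^ 2 / μ := by positivity
  calc μ * δ * ((1 - 4 * a * z) * V ^ 2 + 1) + 3 * (2 * δ * z * |d * V|)
      = μ * δ * ((1 - 4 * a * z) * V ^ 2) + μ * δ + δ * z * (6 * |d * V|) := by ring
    _ ≤ μ * δ * ((1 - 4 * a * z) * V ^ 2) + μ * δ + δ * z * (μ * V ^ 2 + 9 * d ^ 2 / μ) := by gcongr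
    _ = μ * δ * ((1 - 4 * a * z + z) * V ^ 2) + δ * μ + δ * (9 * z * d ^ 2 / μ) := by ring
    _ ≤ μ * δ * (contractionRate D z * V ^ 2) + 1 * μ + 1 * (9 * z * d ^ 2 / μ) := by gcongr
    _ = _ := by ring

lemma mulVec_potential {α : Type*} [Fintype α] [DecidableEq α] (M : Matrix (Perm α) (Perm α) ℝ)
    (S : Finset α) (x : Perm α) :
    (M *ᵥ potential κ μ δ S) x =
      Real.exp (κ * δ) * (M *ᵥ fun y ↦ (1 - δ) ^ #(fixedIn S y)) x +
        μ * δ * (M *ᵥ fun y ↦ blockExcess S y ^ 2) x := by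
  simp only [Matrix.mulVec, dotProduct, potential, mul_sum, ← sum_add_distrib]
  exact sum_congr rfl fun y _ ↦ by ring

variable {N : ℕ} [NeZero N] {A : Finset (Fin N)}

lemma transMat_mulVec_one_sub_pow_card_fixedIn_le_drift (ha : 0 ≤ a) (hb : 0 ≤ b)
    (hW : ∑ i, blockWeight a b Aᶜ i = N) (hδ : 0 ≤ δ) (hδD : δ ≤ D) (hD : D < 1)
    (hzD : b / N / (1 - D) ≤ 1 / 4) (x : Perm (Fin N)) :
    (transMat a b A *ᵥ fun y ↦ (1 - δ) ^ #(fixedIn Aᶜ y)) x ≤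
      (1 - 2 * (δ * (1 - δ / 2)) * (b / N) * (#Aᶜ / N)) *
          (1 - contractionRate D (b / N) * δ) ^ #(fixedIn Aᶜ x) +
        (6 * ((b / N) ^ 2 / (1 - D)) +
          2 * δ * (b / N) * |(b - a) / N * blockExcess Aᶜ x|) := by
  have hβ1 : (#Aᶜ / N : ℝ) ≤ 1 := by
    rw [div_le_one (Nat.cast_pos.2 (NeZero.pos N))]
    exact_mod_cast card_finset_fin_le Aᶜ
  have hX := transMat_mulVec_one_sub_pow_card_fixedIn_le ha hb hW x hδ (hδD.trans_lt hD)
  have hsplit : (#Aᶜ + (b - a) * blockExcess Aᶜ x - b * #(fixedIn Aᶜ x)) / N =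
      #Aᶜ / N + (b - a) / N * blockExcess Aᶜ x - b / N * #(fixedIn Aᶜ x) := by ring
  rw [hsplit] at hX
  linarith [one_sub_pow_mul_drift_le #(fixedIn Aᶜ x) hδ hδD hD (by positivity) hzD
    (by positivity) hβ1 ((b - a) / N * blockExcess Aᶜ x)]

lemma transMat_mulVec_potential_le (ha : 1 ≤ a) (hb : 0 ≤ b) (hW : ∑ i, blockWeight a b Aᶜ i = N)
    (hδ : 0 ≤ δ) (hδD : δ ≤ D) (hD : D < 1) (hzD : b / N / (1 - D) ≤ 1 / 4) (hκ1 : κ ≤ 1)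
    (hκ : κ * (2 + b / N / (1 - D)) ≤ 2 * (1 - D / 2) * (#Aᶜ / N)) (hμ : 0 < μ)
    (x : Perm (Fin N)) :
    (transMat a b A *ᵥ potential κ μ δ Aᶜ) x ≤
      potential κ μ (contractionRate D (b / N) * δ) Aᶜ x + stepError a b D μ N := by
  have hz : 0 ≤ b / N := by positivity
  have hX := transMat_mulVec_one_sub_pow_card_fixedIn_le_drift (zero_le_one.trans ha) hb hW hδ hδD
    hD hzD x
  have hV := transMat_mulVec_blockExcess_sq_le (zero_le_one.trans ha) hb hW x
  set X := #(fixedIn Aᶜ x)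
  set V := blockExcess Aᶜ x
  have hexp : Real.exp (κ * δ) ≤ 3 :=
    (Real.exp_le_exp.2 (by nlinarith)).trans Real.exp_one_lt_three.le
  have hgain := exp_mul_one_sub_gain_le hδ hδD hz (by positivity) hκ
  have hexcess := excess_drift_le ha hδ (hδD.trans hD.le) hz hzD hμ V ((b - a) / N)
  have hr := contractionRate_le_one hD hz
  set m := 2 * (δ * (1 - δ / 2)) * (b / N) * (#Aᶜ / N)
  set r := contractionRate D (b / N)
  have hrδ : 0 ≤ (1 - r * δ) ^ X := pow_nonneg (by nlinarith) X
  have : 0 ≤ 6 * ((b / N) ^ 2 / (1 - D)) + 2 * δ * (b / N) * |(b - a) / N * V| := by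
    have : 0 < 1 - D := by linarith
    positivity
  calc (transMat a b A *ᵥ potential κ μ δ Aᶜ) x
      ≤ Real.exp (κ * δ) * ((1 - m) * (1 - r * δ) ^ X + (6 * ((b / N) ^ 2 / (1 - D)) +
          2 * δ * (b / N) * |(b - a) / N * V|)) +
        μ * δ * ((1 - 4 * a * (b / N)) * V ^ 2 + 1) := by
        rw [mulVec_potential]
        gcongr
        exact hV.trans_eq (by ring)
    _ ≤ Real.exp (κ * (r * δ)) * (1 - r * δ) ^ X + 3 * (6 * ((b / N) ^ 2 / (1 - D)) +
          2 * δ * (b / N) * |(b - a) / N * V|) +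
        μ * δ * ((1 - 4 * a * (b / N)) * V ^ 2 + 1) := by
        rw [mul_add, ← mul_assoc]
        gcongr
    _ ≤ potential κ μ (r * δ) Aᶜ x + stepError a b D μ N := by
        have hμN : 9 * (b / N) * ((b - a) / N) ^ 2 / μ =
            9 * (b / N) * (b - a) ^ 2 / (μ * N ^ 2) := by
          field_simp
        unfold potential stepError
        linarith

lemma exp_mul_transMat_pow_mulVec_le (ha : 1 ≤ a) (hb : 0 ≤ b)
    (hW : ∑ i, blockWeight a b Aᶜ i = N) (hD0 : 0 ≤ D) (hD : D < 1)
    (hzD : b / N / (1 - D) ≤ 1 / 4) (hκ1 : κ ≤ 1)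
    (hκ : κ * (2 + b / N / (1 - D)) ≤ 2 * (1 - D / 2) * (#Aᶜ / N)) (hμ : 0 < μ)
    (T : ℕ) (x : Perm (Fin N)) :
    Real.exp (κ * D) * (transMat a b A ^ T *ᵥ fun y ↦ (1 - D) ^ #(fixedIn Aᶜ y)) x ≤
      potential κ μ (contractionRate D (b / N) ^ T * D) Aᶜ x + T * stepError a b D μ N := by
  have hz : 0 ≤ b / N := by positivity
  have hr0 : 0 ≤ contractionRate D (b / N) := by
    linarith [one_third_le_contractionRate hD0 hD hz hzD]
  have hr1 := contractionRate_le_one hD hz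
  have hM := transMat_mem_rowStochastic (zero_le_one.trans ha) hb hW
  have hiterate := pow_mulVec_le_of_mulVec_le_succ_add
    (Φ := fun t ↦ potential κ μ (contractionRate D (b / N) ^ t * D) Aᶜ) hM
    (fun t y ↦ by
      rw [pow_succ', mul_assoc]
      exact transMat_mulVec_potential_le ha hb hW (by positivity)
        (mul_le_of_le_one_left hD0 (pow_le_one₀ hr0 hr1)) hD hzD hκ1 hκ hμ y) T x
  have hexcess : 0 ≤ (transMat a b A ^ T *ᵥ fun y ↦ blockExcess Aᶜ y ^ 2) x :=
    sum_nonneg fun y _ ↦ mul_nonneg ((pow_mem hM T).1 x y) (sq_nonneg _)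
  rw [pow_zero, one_mul, mulVec_potential] at hiterate
  exact (le_add_of_nonneg_right (by positivity)).trans hiterate

lemma potential_one_le {α : Type*} [Fintype α] [DecidableEq α] (S : Finset α) (hδ1 : δ ≤ 1) :
    potential κ μ δ S 1 ≤
      Real.exp ((κ - #S) * δ) + μ * δ * (#S - (#S : ℝ) ^ 2 / Fintype.card α) ^ 2 := by
  have hpow : (1 - δ) ^ #S ≤ Real.exp (-(#S * δ)) := by
    rw [← mul_neg, Real.exp_nat_mul]
    exact pow_le_pow_left₀ (by linarith) (Real.one_sub_le_exp_neg δ) _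
  rw [potential, fixedIn_one, blockExcess_one, sub_mul, sub_eq_add_neg (κ * δ),
    Real.exp_add]
  gcongr

end Potential

section Asymptotics

variable {b c D z : ℝ}

/-- The number of shuffles after which the lower bound is claimed. -/
def shuffleCount (b c N : ℝ) : ℕ := ⌊N / (2 * b) * (Real.log N - c)⌋₊

lemma tendsto_inv_sqrt_atTop : Tendsto (fun N : ℝ ↦ (√N)⁻¹) atTop (𝓝 0) :=
  tendsto_inv_atTop_zero.comp Real.tendsto_sqrt_atTop

lemma tendsto_shuffleCount_mul_sub_log (hb : 0 < b) (c : ℝ) :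
    Tendsto (fun N ↦ shuffleCount b c N * (2 * (b / N)) - Real.log N) atTop (𝓝 (-c)) := by
  have hlower : Tendsto (fun N ↦ -c - 2 * b / N) atTop (𝓝 (-c)) := by
    simpa only [sub_zero, id] using
      (tendsto_const_nhds (x := -c)).sub (tendsto_const_nhds.div_atTop tendsto_id)
  refine tendsto_of_tendsto_of_tendsto_of_le_of_le' hlower tendsto_const_nhds ?_ ?_ <;>
    filter_upwards [Real.tendsto_log_atTop.eventually_ge_atTop c, eventually_gt_atTop 0]
      with N hlog hN <;>
    have hcancel : N / (2 * b) * (Real.log N - c) * (2 * (b / N)) = Real.log N - c := by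
      field_simp
  · have hfloor := mul_le_mul_of_nonneg_right
      (Nat.lt_floor_add_one (N / (2 * b) * (Real.log N - c))).le
      (by positivity : 0 ≤ 2 * (b / N))
    rw [hcancel, add_mul, one_mul, ← shuffleCount] at hfloor
    rw [mul_div_assoc]
    linarith
  · have hfloor := mul_le_mul_of_nonneg_right
      (Nat.floor_le (mul_nonneg (by positivity : 0 ≤ N / (2 * b)) (sub_nonneg.2 hlog)))
      (by positivity : 0 ≤ 2 * (b / N))
    rw [hcancel, ← shuffleCount] at hfloor
    linarith

lemma tendsto_shuffleCount_div (hb : 0 < b) (c : ℝ) :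
    Tendsto (fun N ↦ shuffleCount b c N / (N * √N)) atTop (𝓝 0) := by
  have hlog : Tendsto (fun N ↦ Real.log N / √N) atTop (𝓝 0) := by
    simpa only [Real.sqrt_eq_rpow] using
      (isLittleO_log_rpow_atTop (by norm_num : (0 : ℝ) < 1 / 2)).tendsto_div_nhds_zero
  have hsum :=
    (((tendsto_shuffleCount_mul_sub_log hb c).mul tendsto_inv_sqrt_atTop).add hlog).mul_const
      (2 * b)⁻¹
  rw [mul_zero, zero_add, zero_mul] at hsum
  refine hsum.congr' ?_
  filter_upwards [eventually_gt_atTop 0] with N hN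
  have : 0 < √N := Real.sqrt_pos.2 hN
  field_simp
  ring

lemma abs_log_contractionRate_add_le (hD0 : 0 ≤ D) (hD : D < 1) (hz : 0 ≤ z)
    (hzD : z / (1 - D) ≤ 1 / 4) :
    |Real.log (contractionRate D z) + 2 * z| ≤ 17 * (z ^ 2 / (1 - D)) := by
  have hr3 := one_third_le_contractionRate hD0 hD hz hzD
  have : z ≤ z / (1 - D) := le_div_self hz (by linarith) (by linarith)
  have hsq : z ^ 2 / (1 - D) = z * (z / (1 - D)) := by ring
  have hr : contractionRate D z = 1 - 2 * z - z ^ 2 / (1 - D) := rfl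
  have hσ : z ^ 2 ≤ z ^ 2 / (1 - D) := le_div_self (sq_nonneg z) (by linarith) (by linarith)
  set r := contractionRate D z
  have hr0 : 0 < r := by linarith
  have hupper := Real.log_le_sub_one_of_pos hr0
  have hlower := Real.one_sub_inv_le_log_of_pos hr0
  have hinv : r⁻¹ - 1 ≤ 2 * z + 17 * (z ^ 2 / (1 - D)) := by
    rw [sub_le_iff_le_add, inv_le_comm₀ hr0 (by positivity), inv_le_iff_one_le_mul₀ (by positivity)]
    nlinarith
  rw [abs_le]
  constructor <;> linarith

lemma tendsto_div_div_one_sub (b D : ℝ) : Tendsto (fun N ↦ b / N / (1 - D)) atTop (𝓝 0) := by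
  simpa only [zero_div, id] using
    ((tendsto_const_nhds (x := b)).div_atTop tendsto_id).div_const (1 - D)

lemma eventually_div_div_one_sub_le (b D : ℝ) : ∀ᶠ N in atTop, b / N / (1 - D) ≤ 1 / 4 :=
  (tendsto_div_div_one_sub b D).eventually_le_const (by norm_num)

lemma eventually_mul_two_add_le (b : ℝ) {κ : ℝ} (hκ : κ * 2 < 1 - D / 2) :
    ∀ᶠ N in atTop, κ * (2 + b / N / (1 - D)) ≤ 1 - D / 2 := by
  have hlim := ((tendsto_div_div_one_sub b D).const_add 2).const_mul κ
  rw [add_zero] at hlim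
  exact hlim.eventually_le_const hκ

lemma tendsto_mul_contractionRate_pow (hb : 0 < b) (c : ℝ) (hD0 : 0 ≤ D) (hD : D < 1) :
    Tendsto (fun N ↦ N * contractionRate D (b / N) ^ shuffleCount b c N) atTop
      (𝓝 (Real.exp c)) := by
  have hquad : Tendsto (fun N ↦ 17 * b ^ 2 / (1 - D) *
      (shuffleCount b c N / (N * √N) * (√N)⁻¹)) atTop (𝓝 0) := by
    simpa only [mul_zero] using
      ((tendsto_shuffleCount_div hb c).mul tendsto_inv_sqrt_atTop).const_mul
        (17 * b ^ 2 / (1 - D))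
  have hlog : Tendsto (fun N ↦ shuffleCount b c N *
      (Real.log (contractionRate D (b / N)) + 2 * (b / N))) atTop (𝓝 0) := by
    refine squeeze_zero_norm' ?_ hquad
    filter_upwards [eventually_div_div_one_sub_le b D, eventually_gt_atTop 0] with N hzD hN
    rw [norm_mul, Real.norm_natCast, Real.norm_eq_abs]
    calc _ ≤ shuffleCount b c N * (17 * ((b / N) ^ 2 / (1 - D))) := by
          gcongr
          exact abs_log_contractionRate_add_le hD0 hD (by positivity) hzD
      _ = _ := by
          have : 0 < √N := Real.sqrt_pos.2 hN
          field_simp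
          rw [Real.sq_sqrt hN.le]
  have hexp := (Real.continuous_exp.tendsto _).comp
    (hlog.sub (tendsto_shuffleCount_mul_sub_log hb c))
  rw [zero_sub, neg_neg] at hexp
  refine hexp.congr' ?_
  filter_upwards [eventually_div_div_one_sub_le b D, eventually_gt_atTop 0] with N hzD hN
  have hr : 0 < contractionRate D (b / N) := by
    linarith [one_third_le_contractionRate hD0 hD (by positivity) hzD]
  rw [Function.comp_apply, show ∀ t u l : ℝ, t * (l + u) - (t * u - Real.log N) =
    Real.log N + t * l by intros; ring, Real.exp_add, Real.exp_log hN, Real.exp_nat_mul,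
    Real.exp_log hr]

lemma tendsto_shuffleCount_mul_stepError (a : ℝ) (hb : 0 < b) (c : ℝ) (hD : D < 1) :
    Tendsto (fun N ↦ shuffleCount b c N * stepError a b D (N * √N)⁻¹ N) atTop (𝓝 0) := by
  have hlim := (tendsto_shuffleCount_div hb c).mul
    ((tendsto_inv_sqrt_atTop.const_mul (18 * b ^ 2 / (1 - D))).add_const (1 + 9 * b * (b - a) ^ 2))
  rw [zero_mul] at hlim
  refine hlim.congr' ?_
  filter_upwards [eventually_gt_atTop 0] with N hN
  have : 0 < √N := Real.sqrt_pos.2 hN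
  have hN' : N = √N ^ 2 := (Real.sq_sqrt hN.le).symm
  unfold stepError
  have h1D : 1 - D ≠ 0 := by linarith
  field_simp
  linear_combination
    shuffleCount b c N * (18 * b ^ 2 + √N * (1 - D) * (9 * b * (b - a) ^ 2)) * hN'

/-- The upper bound on `exp (κ * D)` times the expectation of `(1 - D) ^ X` after
`shuffleCount b c N` shuffles. -/
def testBound (a b c κ D N : ℝ) : ℝ :=
  Real.exp ((κ - N / 2) * (contractionRate D (b / N) ^ shuffleCount b c N * D)) +
    (N * √N)⁻¹ * (contractionRate D (b / N) ^ shuffleCount b c N * D) * (N / 4) ^ 2 +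
    shuffleCount b c N * stepError a b D (N * √N)⁻¹ N

lemma tendsto_testBound (a : ℝ) (hb : 0 < b) (c κ : ℝ) (hD0 : 0 ≤ D) (hD : D < 1) :
    Tendsto (testBound a b c κ D) atTop (𝓝 (Real.exp (-(D * Real.exp c / 2)))) := by
  have hpow := tendsto_mul_contractionRate_pow hb c hD0 hD
  have hexponent : Tendsto (fun N ↦ (κ * N⁻¹ - 1 / 2) *
      (N * contractionRate D (b / N) ^ shuffleCount b c N * D)) atTop
      (𝓝 (-(D * Real.exp c / 2))) := by
    convert ((tendsto_inv_atTop_zero.const_mul κ).sub_const (1 / 2)).mul (hpow.mul_const D) using 2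
    ring
  have hfluctuation := (hpow.mul tendsto_inv_sqrt_atTop).mul_const (D / 16)
  rw [mul_zero, zero_mul] at hfluctuation
  have hlim := (((Real.continuous_exp.tendsto _).comp hexponent).add hfluctuation).add
    (tendsto_shuffleCount_mul_stepError a hb c hD)
  rw [add_zero, add_zero] at hlim
  refine hlim.congr' ?_
  filter_upwards [eventually_gt_atTop 0] with N hN
  have : 0 < √N := Real.sqrt_pos.2 hN
  unfold testBound
  congr 2
  · rw [Function.comp_apply]
    congr 1
    field_simp
  · field_simp
    norm_num

/-- The bound on `1 - dTV` obtained from the test function `(1 - D) ^ X`: the geometric mean of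
its expectation after `shuffleCount b c N` shuffles and of the uniform expectation of its
inverse. -/
def affinityBound (a b c κ D N : ℝ) : ℝ :=
  √(Real.exp (-(κ * D)) * testBound a b c κ D N) * √(Real.exp (D / (1 - D) * (1 / 2)))

lemma tendsto_affinityBound (a : ℝ) (hb : 0 < b) (c κ : ℝ) (hD0 : 0 ≤ D) (hD : D < 1) :
    Tendsto (affinityBound a b c κ D) atTop
      (𝓝 (Real.exp ((D / (1 - D) * (1 / 2) - D * Real.exp c / 2 - κ * D) / 2))) := by
  have hvalue : Real.exp ((D / (1 - D) * (1 / 2) - D * Real.exp c / 2 - κ * D) / 2) =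
      √(Real.exp (-(κ * D)) * Real.exp (-(D * Real.exp c / 2))) *
        √(Real.exp (D / (1 - D) * (1 / 2))) := by
    rw [← Real.exp_add, ← Real.exp_half, ← Real.exp_half, ← Real.exp_add]
    ring_nf
  rw [hvalue]
  exact ((tendsto_testBound a hb c κ hD0 hD).const_mul _).sqrt.mul_const _

lemma one_sub_one_div_mem_Ico {k : ℝ} (hk : 1 < k) : 1 - 1 / k ∈ Set.Ico 0 1 := by
  have hk0 : 0 < k := one_pos.trans hk
  exact ⟨sub_nonneg.2 ((div_le_one hk0).2 hk.le), sub_lt_self 1 (by positivity)⟩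

lemma one_sub_half_mul_two_lt {k : ℝ} (hk : 1 < k) :
    (1 - k / 2) * 2 < 1 - (1 - 1 / k) / 2 := by
  have : 0 < k := one_pos.trans hk
  have hgap : 1 - (1 - 1 / k) / 2 - (1 - k / 2) * 2 = (2 * k - 1) * (k - 1) / (2 * k) := by
    field_simp
    ring
  have hpos : 0 < (2 * k - 1) * (k - 1) / (2 * k) :=
    div_pos (mul_pos (by linarith) (by linarith)) (by positivity)
  linarith

lemma tendsto_affinityBound_of_sq_eq (a : ℝ) (hb : 0 < b) {k : ℝ} (hk : 1 < k)
    (hkc : k ^ 2 = 1 + Real.exp c / 2) :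
    Tendsto (affinityBound a b c (1 - k / 2) (1 - 1 / k)) atTop
      (𝓝 (Real.exp (-(1 / 2) * (k - 1) ^ 2))) := by
  obtain ⟨hD0, hD⟩ := one_sub_one_div_mem_Ico hk
  convert tendsto_affinityBound a hb c (1 - k / 2) hD0 hD using 3
  rw [show Real.exp c = 2 * (k ^ 2 - 1) by linarith]
  field_simp
  ring

end Asymptotics

section LowerBound

lemma one_sub_dTV_unif_le {N : ℕ} (S : Finset (Fin N)) {p : Perm (Fin N) → ℝ} {D : ℝ}
    (hp : ∀ x, 0 ≤ p x) (hp1 : ∑ x, p x = 1) (hD0 : 0 ≤ D) (hD : D < 1) :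
    1 - dTV p (unif N) ≤ √(∑ x, p x * (1 - D) ^ #(fixedIn S x)) *
      √(Real.exp (D / (1 - D) * (#S / N))) := by
  have hθ : 0 < 1 - D := by linarith
  have hsum : ∑ x, unif N x = 1 := by
    simp [unif, Fintype.card_perm, Nat.factorial_ne_zero]
  refine (one_sub_dTV_le_sqrt_mul_sqrt hp (fun x ↦ by unfold unif; positivity) hp1 hsum
    fun x ↦ pow_pos hθ #(fixedIn S x)).trans ?_
  gcongr
  have hinv : (1 - D)⁻¹ = 1 + D / (1 - D) := by field_simp; ring
  have hcount := sum_one_add_pow_card_fixedIn_le S (div_nonneg hD0 hθ.le)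
  rw [Fintype.card_fin, mul_div_assoc] at hcount
  simp only [unif, ← mul_sum, ← inv_pow, hinv]
  rwa [inv_mul_le_iff₀ (by positivity)]

variable {a b κ D : ℝ} {n : ℕ} [NeZero n] {A : Finset (Fin (2 * n))}

lemma card_compl_div_eq_half (hA : #A = n) : (#Aᶜ / (2 * n : ℕ) : ℝ) = 1 / 2 := by
  have hn : (n : ℝ) ≠ 0 := NeZero.ne _
  rw [card_compl, Fintype.card_fin, hA, show 2 * n - n = n by omega]
  push_cast
  field_simp

lemma sum_blockWeight_compl_eq (hab : a + b = 2) (hA : #A = n) :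
    ∑ i, blockWeight a b Aᶜ i = (2 * n : ℕ) := by
  have hn : ((2 * n : ℕ) : ℝ) ≠ 0 := NeZero.ne _
  rw [sum_blockWeight, Fintype.card_fin, (div_eq_iff hn).1 (card_compl_div_eq_half hA)]
  linear_combination (2 * n : ℕ) / 2 * hab

lemma potential_compl_one_le {μ δ : ℝ} (hA : #A = n) (hδ1 : δ ≤ 1) :
    potential κ μ δ Aᶜ 1 ≤
      Real.exp ((κ - (2 * n : ℕ) / 2) * δ) + μ * δ * ((2 * n : ℕ) / 4) ^ 2 := by
  have hn : ((2 * n : ℕ) : ℝ) ≠ 0 := NeZero.ne _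
  refine (potential_one_le Aᶜ hδ1).trans_eq ?_
  rw [Fintype.card_fin, (div_eq_iff hn).1 (card_compl_div_eq_half hA)]
  field_simp
  ring_nf

lemma exp_mul_transMat_pow_mulVec_one_le_testBound (ha : 1 ≤ a) (hb : 0 ≤ b) (hab : a + b = 2)
    (hA : #A = n) (hD0 : 0 ≤ D) (hD : D < 1) (hzD : b / (2 * n : ℕ) / (1 - D) ≤ 1 / 4)
    (hκ1 : κ ≤ 1) (hκ : κ * (2 + b / (2 * n : ℕ) / (1 - D)) ≤ 1 - D / 2) (c : ℝ) :
    Real.exp (κ * D) * (transMat a b A ^ shuffleCount b c (2 * n : ℕ) *ᵥ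
        fun y ↦ (1 - D) ^ #(fixedIn Aᶜ y)) 1 ≤ testBound a b c κ D (2 * n : ℕ) := by
  have hn : 0 < ((2 * n : ℕ) : ℝ) := Nat.cast_pos.2 (NeZero.pos _)
  have hz : 0 ≤ b / (2 * n : ℕ) := by positivity
  have hr0 : 0 ≤ contractionRate D (b / (2 * n : ℕ)) := by
    linarith [one_third_le_contractionRate hD0 hD hz hzD]
  have hδ1 := (mul_le_of_le_one_left hD0 (pow_le_one₀ hr0 (contractionRate_le_one hD hz)
    (n := shuffleCount b c (2 * n : ℕ)))).trans hD.le
  refine (exp_mul_transMat_pow_mulVec_le ha hb (sum_blockWeight_compl_eq hab hA) hD0 hD hzD hκ1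
    ?_ (μ := ((2 * n : ℕ) * √(2 * n : ℕ))⁻¹) (by positivity) _ 1).trans
    (add_le_add_left (potential_compl_one_le hA hδ1) _)
  rw [card_compl_div_eq_half hA]
  linarith

lemma one_sub_dTV_transMat_pow_le (ha : 1 ≤ a) (hb : 0 ≤ b) (hab : a + b = 2) (hA : #A = n)
    (hD0 : 0 ≤ D) (hD : D < 1) (hzD : b / (2 * n : ℕ) / (1 - D) ≤ 1 / 4) (hκ1 : κ ≤ 1)
    (hκ : κ * (2 + b / (2 * n : ℕ) / (1 - D)) ≤ 1 - D / 2) (c : ℝ) :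
    1 - dTV (fun y ↦ (transMat a b A ^ shuffleCount b c (2 * n : ℕ)) 1 y) (unif (2 * n)) ≤
      affinityBound a b c κ D (2 * n : ℕ) := by
  have hM := pow_mem (transMat_mem_rowStochastic (zero_le_one.trans ha) hb
    (sum_blockWeight_compl_eq hab hA)) (shuffleCount b c (2 * n : ℕ))
  have hdTV := one_sub_dTV_unif_le Aᶜ (hM.1 1) (Matrix.sum_row_of_mem_rowStochastic hM 1) hD0 hD
  rw [card_compl_div_eq_half hA] at hdTV
  refine hdTV.trans ?_
  unfold affinityBound
  gcongr
  rw [Real.exp_neg, le_inv_mul_iff₀ (Real.exp_pos _)]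
  exact exp_mul_transMat_pow_mulVec_one_le_testBound ha hb hab hA hD0 hD hzD hκ1 hκ c

end LowerBound

theorem brt_lower_bound_general (a b : ℝ) (hb : 0 < b) (hba : b ≤ a) (hab : a + b = 2)
    (c : ℝ) :
    ∀ ε : ℝ, 0 < ε → ∃ n0 : ℕ, ∀ n : ℕ, n0 ≤ n →
      ∀ A : Finset (Fin (2 * n)), A.card = n →
        1 - Real.exp (-(1 / 2) * (Real.sqrt (1 + Real.exp c / 2) - 1) ^ 2) - ε ≤
          dTV
            (fun y => (transMat a b A ^
              ⌊((2 * n : ℝ) / (2 * b)) * (Real.log (2 * n) - c)⌋₊) 1 y)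
            (unif (2 * n)) := by
  intro ε hε
  set k := √(1 + Real.exp c / 2)
  have hk : 1 < k := Real.lt_sqrt_of_sq_lt (by linarith [Real.exp_pos c])
  have hkc : k ^ 2 = 1 + Real.exp c / 2 := Real.sq_sqrt (by positivity)
  obtain ⟨hD0, hD⟩ := one_sub_one_div_mem_Ico hk
  have hdouble : Tendsto (fun n : ℕ ↦ ((2 * n : ℕ) : ℝ)) atTop atTop :=
    tendsto_natCast_atTop_atTop.comp (tendsto_id.const_mul_atTop' two_pos)
  refine eventually_atTop.1 ?_
  filter_upwards [hdouble.eventually (eventually_div_div_one_sub_le b (1 - 1 / k)),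
    hdouble.eventually (eventually_mul_two_add_le b (one_sub_half_mul_two_lt hk)),
    hdouble.eventually ((tendsto_affinityBound_of_sq_eq a hb hk hkc).eventually_le_const
      (lt_add_of_pos_right _ hε)), eventually_ne_atTop 0] with n hzD hκn hbound hn A hA
  have : NeZero n := ⟨hn⟩
  have hdTV := one_sub_dTV_transMat_pow_le (by linarith) hb.le hab hA hD0 hD hzD (by linarith)
    hκn c
  rw [shuffleCount] at hdTV
  push_cast at hdTV hbound
  linarith

/-- Cutoff lower bound: for every fixed `c > 0`,
`liminf_{N→∞} d_TV(P^{t_N}(id, ·), U) ≥ 1 − exp(−(1/2)(√(1 + e^c/2) − 1)²)`,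
where `t_N = ⌊(N/(2b))(log N − c)⌋` and `N = 2n`. -/
theorem brt_lower_bound (a b : ℝ) (hb : 0 < b) (hba : b ≤ a) (hab : a + b = 2)
    (c : ℝ) (hc : 0 < c) :
    ∀ ε : ℝ, 0 < ε → ∃ n0 : ℕ, ∀ n : ℕ, n0 ≤ n →
      ∀ A : Finset (Fin (2 * n)), A.card = n →
        1 - Real.exp (-(1 / 2) * (Real.sqrt (1 + Real.exp c / 2) - 1) ^ 2) - ε ≤
          dTV
            (fun y => (transMat a b A ^
              ⌊((2 * n : ℝ) / (2 * b)) * (Real.log (2 * n) - c)⌋₊) 1 y)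
            (unif (2 * n)) :=
  brt_lower_bound_general a b hb hba hab c

end BRT
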